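/- arXiv:2602.08780 — 9 statements merged into one kernel-verified Lean document; each statement's English description precedes it below -/
import Mathlib

section
/- Fix a natural number N with 1 ≤ t ≤ N. If (α, β) satisfies the t-deletion orthogonality conditions, then (α, β) satisfies the (t−1)-deletion orthogonality conditions. -/
open Finset

/-!
Pascal's rule `C(N - t + 1, k) = C(N - t, k) + C(N - t, k - 1)` splits the `(t - 1)`-deletion sum
at `(a, b)` into the `t`-deletion sums at `(a, b)` and at `(a + 1, b + 1)`.
-/

section Deletion

variable {M : Type*} [AddCommMonoid M]

theorem sum_range_choose_nsmul_of_lt {n m : ℕ} (hnm : n < m) (g : ℕ → M) :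
    ∑ k ∈ range m, n.choose k • g k = ∑ k ∈ range (n + 1), n.choose k • g k := by
  refine (sum_subset (range_subset_range.2 hnm) fun k _ hk ↦ ?_).symm
  rw [Nat.choose_eq_zero_of_lt (by simpa using hk), zero_nsmul]

theorem sum_range_succ_choose_nsmul_of_lt {n m : ℕ} (hnm : n + 1 < m) (g : ℕ → M) :
    ∑ k ∈ range m, (n + 1).choose k • g k =
      ∑ k ∈ range m, n.choose k • g k + ∑ k ∈ range m, n.choose k • g (k + 1) := by
  have hn : n < m := n.lt_succ_self.trans hnm
  rw [sum_range_choose_nsmul_of_lt hnm, sum_range_choose_nsmul_of_lt hn,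
    sum_range_choose_nsmul_of_lt hn (fun k ↦ g (k + 1))]
  exact sum_choose_succ_nsmul (fun k _ ↦ g k) n

/-- The `m`-deletion orthogonality conditions, for `m ≤ N` (the subtraction `N - m` truncates), with
an arbitrary array `f` in place of the normalized products `conj (α i) * β j / √(C(N, i) C(N, j))`.
-/
def DeletionOrthogonal (N m : ℕ) (f : ℕ → ℕ → M) : Prop :=
  ∀ a b : ℕ, a ≤ m → b ≤ m →
    ∑ k ∈ range (N + 1), (N - m).choose k • f (k + a) (k + b) = 0

theorem deletion_step_orthogonality_general {N t : ℕ} (ht : t < N) {f : ℕ → ℕ → M}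
    (h : DeletionOrthogonal N (t + 1) f) : DeletionOrthogonal N t f := by
  intro a b ha hb
  have hsub : N - t = N - (t + 1) + 1 := by omega
  have hshift : ∑ k ∈ range (N + 1), (N - (t + 1)).choose k • f (k + 1 + a) (k + 1 + b) = 0 := by
    simpa only [add_assoc, add_comm 1] using h (a + 1) (b + 1) (by omega) (by omega)
  rw [hsub, sum_range_succ_choose_nsmul_of_lt (by omega) (fun k ↦ f (k + a) (k + b)),
    h a b (by omega) (by omega), hshift, add_zero]

end Deletion

/-- The array of products of the amplitudes `conj (α i)` and `β j`, normalized by the binomial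
coefficients of `N`. Division by zero makes its entries vanish when `i` or `j` exceeds `N`. -/
noncomputable def normalizedProduct (N : ℕ) (α β : ℕ → ℂ) (i j : ℕ) : ℂ :=
  (starRingEnd ℂ) (α i) * β j / (Real.sqrt ((N.choose i * N.choose j : ℕ)) : ℝ)

theorem deletionOrthogonal_normalizedProduct_iff {N m : ℕ} {α β : ℕ → ℂ} :
    DeletionOrthogonal N m (normalizedProduct N α β) ↔
      ∀ a b : ℕ, a ≤ m → b ≤ m →
        ∑ k ∈ range (N + 1), ((N - m).choose k : ℂ) /
          (Real.sqrt ((N.choose (k + a) * N.choose (k + b) : ℕ)) : ℝ) *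
            ((starRingEnd ℂ) (α (k + a)) * β (k + b)) = 0 := by
  simp only [DeletionOrthogonal, normalizedProduct, nsmul_eq_mul, mul_div_assoc',
    div_mul_eq_mul_div]

theorem deletion_step_orthogonality
    (N t : ℕ) (ht1 : 1 ≤ t) (htN : t ≤ N)
    (α β : ℕ → ℂ) (hα : ∀ k : ℕ, N < k → α k = 0) (hβ : ∀ k : ℕ, N < k → β k = 0)
    (h : ∀ a' b' : ℕ, a' ≤ t → b' ≤ t →
      ∑ k ∈ Finset.range (N + 1), ((N - (t)).choose k : ℂ) / ((Real.sqrt ((N.choose (k + a') * N.choose (k + b') : ℕ)) : ℝ) : ℂ) * ((starRingEnd ℂ) (α (k + a')) * β (k + b')) = 0) :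
    ∀ a' b' : ℕ, a' ≤ t - 1 → b' ≤ t - 1 →
      ∑ k ∈ Finset.range (N + 1), ((N - (t - 1)).choose k : ℂ) / ((Real.sqrt ((N.choose (k + a') * N.choose (k + b') : ℕ)) : ℝ) : ℂ) * ((starRingEnd ℂ) (α (k + a')) * β (k + b')) = 0 := by
  obtain ⟨t, rfl⟩ := Nat.exists_eq_add_of_le' ht1
  exact deletionOrthogonal_normalizedProduct_iff.1 <|
    deletion_step_orthogonality_general htN (deletionOrthogonal_normalizedProduct_iff.2 h)
end

section
/- Fix natural numbers N and t with t ≤ N. If (α, β) satisfies the t-deletion orthogonality conditions, then for every natural number m with m ≤ t, (α, β) satisfies the m-deletion orthogonality conditions. -/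
open Finset

/-!
Let `E` shift an array along its diagonal, `(E f) (a, b) = f (a + 1, b + 1)`. The `m`-deletion sum
at `(a, b)` is the value there of `(1 + E) ^ (N - m) f`, for a single array `f` built from `α` and
`β` which does not depend on `m`. Since `(1 + E) ^ (N - m) = (1 + E) ^ (t - m) * (1 + E) ^ (N - t)`,
the `m`-deletion sum at `(a, b)` is a combination of the `t`-deletion sums at `(a + j, b + j)` with
`j ≤ t - m`, and these indices are at most `t` when `a, b ≤ m`.
-/

section BinomialShift

variable {A M : Type*} [AddMonoid A] [AddCommMonoid M]

/-- The operator `(1 + E) ^ n` in expanded form, where `E` is the shift `(E f) x = f (h + x)`. It is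
written out as a sum so that it unfolds to the deletion sums, for which `h = (1, 1)` in `ℕ × ℕ`. -/
def binomialShift (h : A) (n : ℕ) (f : A → M) (x : A) : M :=
  ∑ k ∈ range (n + 1), n.choose k • f (k • h + x)

lemma binomialShift_zero (h : A) (f : A → M) : binomialShift h 0 f = f := by
  ext x
  simp [binomialShift]

lemma binomialShift_succ (h : A) (n : ℕ) (f : A → M) (x : A) :
    binomialShift h (n + 1) f x = binomialShift h n f x + binomialShift h n f (h + x) := by
  simpa only [binomialShift, succ_nsmul, add_assoc] using
    sum_choose_succ_nsmul (fun k _ ↦ f (k • h + x)) n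

lemma binomialShift_add (h : A) (m n : ℕ) (f : A → M) :
    binomialShift h (m + n) f = binomialShift h m (binomialShift h n f) := by
  induction m with
  | zero => rw [Nat.zero_add, binomialShift_zero]
  | succ m ih =>
    ext x
    rw [Nat.succ_add_eq_add_succ, Nat.add_succ, binomialShift_succ, ih, binomialShift_succ]

lemma binomialShift_eq_sum_range_of_le {n N : ℕ} (hn : n ≤ N) (h : A) (f : A → M) (x : A) :
    binomialShift h n f x = ∑ k ∈ range (N + 1), n.choose k • f (k • h + x) := by
  refine sum_subset (range_mono (Nat.succ_le_succ hn)) fun k _ hk ↦ ?_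
  rw [Nat.choose_eq_zero_of_lt (by simpa using hk), zero_nsmul]

lemma binomialShift_add_eq_zero {h : A} {m n : ℕ} {f : A → M} {x : A}
    (hf : ∀ j ≤ m, binomialShift h n f (j • h + x) = 0) :
    binomialShift h (m + n) f x = 0 := by
  rw [binomialShift_add, binomialShift]
  refine sum_eq_zero fun j hj ↦ ?_
  rw [hf j (mem_range_succ_iff.mp hj), nsmul_zero]

end BinomialShift

theorem deletion_monotone_orthogonality_general {M : Type*} [AddCommMonoid M] {N t : ℕ}
    (htN : t ≤ N) (f : ℕ → ℕ → M)
    (h : ∀ a b : ℕ, a ≤ t → b ≤ t →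
      ∑ k ∈ range (N + 1), (N - t).choose k • f (k + a) (k + b) = 0) :
    ∀ m : ℕ, m ≤ t → ∀ a b : ℕ, a ≤ m → b ≤ m →
      ∑ k ∈ range (N + 1), (N - m).choose k • f (k + a) (k + b) = 0 := by
  have sum_eq (m a b : ℕ) : ∑ k ∈ range (N + 1), (N - m).choose k • f (k + a) (k + b) =
      binomialShift (1, 1) (N - m) (Function.uncurry f) (a, b) := by
    simp [binomialShift_eq_sum_range_of_le (Nat.sub_le N m)]
  simp only [sum_eq] at h ⊢
  intro m hm a b ha hb
  rw [show N - m = (t - m) + (N - t) by lia]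
  refine binomialShift_add_eq_zero fun j hj ↦ ?_
  simpa using h (j + a) (j + b) (by lia) (by lia)

theorem deletion_monotone_orthogonality
    (N t : ℕ) (htN : t ≤ N)
    (α β : ℕ → ℂ) (hα : ∀ k : ℕ, N < k → α k = 0) (hβ : ∀ k : ℕ, N < k → β k = 0)
    (h : ∀ a' b' : ℕ, a' ≤ t → b' ≤ t →
      ∑ k ∈ Finset.range (N + 1), ((N - (t)).choose k : ℂ) / ((Real.sqrt ((N.choose (k + a') * N.choose (k + b') : ℕ)) : ℝ) : ℂ) * ((starRingEnd ℂ) (α (k + a')) * β (k + b')) = 0) :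
    ∀ m : ℕ, m ≤ t →
    ∀ a' b' : ℕ, a' ≤ m → b' ≤ m →
      ∑ k ∈ Finset.range (N + 1), ((N - (m)).choose k : ℂ) / ((Real.sqrt ((N.choose (k + a') * N.choose (k + b') : ℕ)) : ℝ) : ℂ) * ((starRingEnd ℂ) (α (k + a')) * β (k + b')) = 0 := by
  simp only [div_mul_eq_mul_div, ← nsmul_eq_mul, smul_div_assoc] at h ⊢
  exact deletion_monotone_orthogonality_general htN
    (fun i j ↦ starRingEnd ℂ (α i) * β j / (Real.sqrt (N.choose i * N.choose j : ℕ) : ℝ)) h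
end

section
/- Fix natural numbers N and t with t ≤ N. Then (α, β) satisfies the t-insertion orthogonality conditions (C1) if and only if (α, β) satisfies the t-deletion orthogonality conditions. (This is the combinatorial core of the quantum insertion–deletion equivalence on permutation-invariant codes: the t-insertion conditions of Theorem 1 are equivalent to the t-deletion conditions of Aydin et al.) -/
open Finset

/-!
With `E` the diagonal shift `(E f) a b = f (a + 1) (b + 1)`, the binomial sums in both families of
conditions are powers of `1 + E` applied to the array of products `conj (α i) * β l` divided by
`√(C(N, i) * C(N, l))`. Since `(1 + E) ^ (n + j) = (1 + E) ^ j * (1 + E) ^ n` with `n = N - t`, an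
insertion sum at `(a, b)` is a combination of deletion sums at `(a + k, b + k)` for `k ≤ j`, and
these indices stay at most `t` because `a, b ≤ t - j`. Conversely, the deletion sums are the
insertion sums with `j = 0`.
-/

section DiagonalBinomialSum

variable {M : Type*} [AddCommMonoid M]

/-- The `n`-th binomial sum of the array `f` along the diagonal starting at `(a, b)`, that is,
`((1 + E) ^ n f) a b` for the diagonal shift `E`. Partially applied to `n` and `f` it is again an
array, so that it can be iterated. -/
def diagonalBinomialSum (n : ℕ) (f : ℕ → ℕ → M) (a b : ℕ) : M :=
  ∑ k ∈ range (n + 1), n.choose k • f (k + a) (k + b)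

theorem diagonalBinomialSum_zero (f : ℕ → ℕ → M) : diagonalBinomialSum 0 f = f := by
  funext a b
  simp [diagonalBinomialSum]

theorem diagonalBinomialSum_succ (n : ℕ) (f : ℕ → ℕ → M) (a b : ℕ) :
    diagonalBinomialSum (n + 1) f a b =
      diagonalBinomialSum n f a b + diagonalBinomialSum n f (a + 1) (b + 1) := by
  simpa only [diagonalBinomialSum, add_right_comm _ 1, add_assoc _ _ 1] using
    sum_choose_succ_nsmul (fun k _ ↦ f (k + a) (k + b)) n

theorem diagonalBinomialSum_add (n j : ℕ) (f : ℕ → ℕ → M) :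
    diagonalBinomialSum (n + j) f = diagonalBinomialSum j (diagonalBinomialSum n f) := by
  induction j with
  | zero => rw [add_zero, diagonalBinomialSum_zero]
  | succ j ih =>
    funext a b
    rw [← add_assoc, diagonalBinomialSum_succ, diagonalBinomialSum_succ, ih]

theorem diagonalBinomialSum_eq_zero {n a b : ℕ} {f : ℕ → ℕ → M}
    (hf : ∀ k ≤ n, f (k + a) (k + b) = 0) : diagonalBinomialSum n f a b = 0 :=
  sum_eq_zero fun k hk ↦ by rw [hf k (mem_range_succ_iff.mp hk), smul_zero]

theorem diagonalBinomialSum_eq_sum_range {n N : ℕ} (hnN : n ≤ N) (f : ℕ → ℕ → M) (a b : ℕ) :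
    diagonalBinomialSum n f a b = ∑ k ∈ range (N + 1), n.choose k • f (k + a) (k + b) := by
  refine sum_subset (range_mono (by gcongr)) fun k _ hk ↦ ?_
  rw [Nat.choose_eq_zero_of_lt (by simpa using hk), zero_smul]

theorem insertion_iff_deletion_orthogonality_general {N t : ℕ} (htN : t ≤ N) (f : ℕ → ℕ → M) :
    (∀ j a b : ℕ, j ≤ t → a ≤ t - j → b ≤ t - j →
      ∑ k ∈ range (N + 1), (N - t + j).choose k • f (k + a) (k + b) = 0) ↔
    (∀ a b : ℕ, a ≤ t → b ≤ t →
      ∑ k ∈ range (N + 1), (N - t).choose k • f (k + a) (k + b) = 0) := by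
  refine ⟨fun insertion a b ha hb ↦ insertion 0 a b t.zero_le ha hb,
    fun deletion j a b hj ha hb ↦ ?_⟩
  rw [← diagonalBinomialSum_eq_sum_range (by lia), diagonalBinomialSum_add]
  refine diagonalBinomialSum_eq_zero fun k hk ↦ ?_
  rw [diagonalBinomialSum_eq_sum_range (N.sub_le t)]
  exact deletion (k + a) (k + b) (by lia) (by lia)

end DiagonalBinomialSum

theorem insertion_iff_deletion_orthogonality
    (N t : ℕ) (htN : t ≤ N)
    (α β : ℕ → ℂ) (hα : ∀ k : ℕ, N < k → α k = 0) (hβ : ∀ k : ℕ, N < k → β k = 0) :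
    (∀ j a' b' : ℕ, j ≤ t → a' ≤ t - j → b' ≤ t - j →
      ∑ k ∈ Finset.range (N + 1), ((N - (t) + j).choose k : ℂ) / ((Real.sqrt ((N.choose (k + a') * N.choose (k + b') : ℕ)) : ℝ) : ℂ) * ((starRingEnd ℂ) (α (k + a')) * β (k + b')) = 0) ↔
    (∀ a' b' : ℕ, a' ≤ t → b' ≤ t →
      ∑ k ∈ Finset.range (N + 1), ((N - (t)).choose k : ℂ) / ((Real.sqrt ((N.choose (k + a') * N.choose (k + b') : ℕ)) : ℝ) : ℂ) * ((starRingEnd ℂ) (α (k + a')) * β (k + b')) = 0) := by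
  simpa only [nsmul_eq_mul, mul_div_assoc', div_mul_eq_mul_div] using
    insertion_iff_deletion_orthogonality_general htN fun i l ↦
      (starRingEnd ℂ) (α i) * β l / (√(N.choose i * N.choose l : ℕ) : ℝ)
end

section
/- Fix natural numbers N and t with t ≤ N. Then (α, β) satisfies the t-insertion non-deformation conditions (C2) if and only if (α, β) satisfies the t-deletion non-deformation conditions. (This is the combinatorial core of the quantum insertion–deletion equivalence on permutation-invariant codes: the t-insertion conditions of Theorem 1 are equivalent to the t-deletion conditions of Aydin et al.) -/
/-!
Let `E` be the diagonal shift `(E g) (a, b) = g (a + 1, b + 1)` on kernels. By the binomial theorem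
`∑ₖ C(m, k) g (a + k, b + k)` is the value of `(1 + E) ^ m g` at `(a, b)`. The factorization
`(1 + E) ^ (m + j) = (1 + E) ^ j * (1 + E) ^ m` therefore writes the insertion sum at level `j` as a
combination of the deletion sums at `(a + i, b + i)` with `i ≤ j`; conversely, the deletion
conditions are the insertion conditions at level `0`.
-/

open Finset

theorem funLeft_pow {R X A : Type*} [Semiring R] [AddCommMonoid A] [Module R A]
    (σ : X → X) (k : ℕ) : LinearMap.funLeft R A σ ^ k = LinearMap.funLeft R A σ^[k] := by
  induction k with
  | zero => rfl
  | succ k ih =>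
    rw [pow_succ', ih, Module.End.mul_eq_comp, ← LinearMap.funLeft_comp, Function.iterate_succ]

section IterateSums

variable {X A : Type*} [AddCommMonoid A]

theorem one_add_funLeft_pow_apply (σ : X → X) (f : X → A) {m N : ℕ} (hm : m ≤ N) (x : X) :
    ((1 + LinearMap.funLeft ℕ A σ) ^ m) f x =
      ∑ k ∈ range (N + 1), m.choose k • f (σ^[k] x) := by
  have term_eq_zero (k : ℕ) (hk : m + 1 ≤ k) : m.choose k • f (σ^[k] x) = 0 := by
    rw [Nat.choose_eq_zero_of_lt hk, zero_nsmul]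
  rw [eventually_constant_sum term_eq_zero (by lia), add_comm, (Commute.one_right _).add_pow]
  simp [funLeft_pow, ← nsmul_eq_mul', LinearMap.funLeft_apply]

theorem sum_choose_add_nsmul_iterate (σ : X → X) (f : X → A) {m n N : ℕ} (hmn : m + n ≤ N)
    (x : X) :
    ∑ k ∈ range (N + 1), (m + n).choose k • f (σ^[k] x) =
      ∑ i ∈ range (n + 1),
        n.choose i • ∑ k ∈ range (N + 1), m.choose k • f (σ^[k] (σ^[i] x)) := by
  have hm : m ≤ N := by lia
  simp_rw [← one_add_funLeft_pow_apply σ f hmn, ← one_add_funLeft_pow_apply σ f hm,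
    ← one_add_funLeft_pow_apply σ _ le_rfl, ← Module.End.mul_apply, ← pow_add, add_comm n m]

end IterateSums

theorem sum_choose_add_nsmul_diagonal {A : Type*} [AddCommMonoid A] (g : ℕ → ℕ → A)
    {m n N : ℕ} (hmn : m + n ≤ N) (a b : ℕ) :
    ∑ k ∈ range (N + 1), (m + n).choose k • g (k + a) (k + b) =
      ∑ i ∈ range (n + 1), n.choose i •
        ∑ k ∈ range (N + 1), m.choose k • g (k + (a + i)) (k + (b + i)) := by
  simpa [Prod.map_iterate, Nat.succ_iterate, add_comm] using
    sum_choose_add_nsmul_iterate (Prod.map Nat.succ Nat.succ) (Function.uncurry g) hmn (a, b)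

theorem insertion_iff_deletion_nonDeformation_general {A : Type*} [AddCommMonoid A]
    (g : ℕ → ℕ → A) {M N t : ℕ} (hMt : M + t ≤ N) :
    (∀ j a b : ℕ, j ≤ t → a ≤ t - j → b ≤ t - j →
      ∑ k ∈ range (N + 1), (M + j).choose k • g (k + a) (k + b) = 0) ↔
    (∀ a b : ℕ, a ≤ t → b ≤ t →
      ∑ k ∈ range (N + 1), M.choose k • g (k + a) (k + b) = 0) := by
  refine ⟨fun insertion a b ↦ insertion 0 a b t.zero_le, fun deletion j a b hj ha hb ↦ ?_⟩
  rw [sum_choose_add_nsmul_diagonal g (by lia)]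
  refine sum_eq_zero fun i hi ↦ ?_
  have hij : i ≤ j := mem_range_succ_iff.mp hi
  rw [deletion (a + i) (b + i) (by lia) (by lia), nsmul_zero]

theorem insertion_iff_deletion_nonDeformation
    (N t : ℕ) (htN : t ≤ N)
    (α β : ℕ → ℂ) (hα : ∀ k : ℕ, N < k → α k = 0) (hβ : ∀ k : ℕ, N < k → β k = 0) :
    (∀ j a' b' : ℕ, j ≤ t → a' ≤ t - j → b' ≤ t - j →
      ∑ k ∈ Finset.range (N + 1), ((N - (t) + j).choose k : ℂ) / ((Real.sqrt ((N.choose (k + a') * N.choose (k + b') : ℕ)) : ℝ) : ℂ) * ((starRingEnd ℂ) (α (k + a')) * α (k + b') - (starRingEnd ℂ) (β (k + a')) * β (k + b')) = 0) ↔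
    (∀ a' b' : ℕ, a' ≤ t → b' ≤ t →
      ∑ k ∈ Finset.range (N + 1), ((N - (t)).choose k : ℂ) / ((Real.sqrt ((N.choose (k + a') * N.choose (k + b') : ℕ)) : ℝ) : ℂ) * ((starRingEnd ℂ) (α (k + a')) * α (k + b') - (starRingEnd ℂ) (β (k + a')) * β (k + b')) = 0) := by
  simpa only [nsmul_eq_mul, div_eq_mul_inv, mul_assoc] using
    insertion_iff_deletion_nonDeformation_general (fun x y ↦
      ((√(N.choose x * N.choose y : ℕ) : ℝ) : ℂ)⁻¹ *
        ((starRingEnd ℂ) (α x) * α y - (starRingEnd ℂ) (β x) * β y)) (Nat.sub_add_cancel htN).le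
end

section
/- Fix natural numbers N, t, s with t + s ≤ N. Then (α, β) satisfies the (t, s) semi-insdel orthogonality conditions (C3) if and only if (α, β) satisfies the (t+s)-deletion orthogonality conditions. (This is the combinatorial core of Lemma 2: the semi-insdel conditions for s deletions followed by t insertions are equivalent to the (t+s)-deletion conditions of Aydin et al.) -/
open Finset

/-!
Let `E` be the shift `g ↦ g (· + 1)`. Then `∑ k, C(m, k) • g k = ((1 + E) ^ m g) 0`, so the
identity `(1 + E) ^ (m + j) = (1 + E) ^ j (1 + E) ^ m` writes a binomial sum of order `m + j` as a
combination of the order-`m` sums of the shifts `g (· + i)`, `i ≤ j`. For `g k = f (k + a) (k + b)`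
the shift by `i` replaces `(a, b)` by `(a + i, b + i)`, which stays in the range of the deletion
conditions as long as `a, b ≤ t + s - j`. Conversely, the deletion conditions are the
semi-insdel conditions at `j = 0`.
-/

section BinomialSums

variable {A : Type*} [AddCommMonoid A] {m j n : ℕ}

theorem sum_range_choose_succ_nsmul (hmn : m + 1 < n) (g : ℕ → A) :
    ∑ k ∈ range n, (m + 1).choose k • g k =
      ∑ k ∈ range n, m.choose k • g k + ∑ k ∈ range n, m.choose k • g (k + 1) := by
  obtain ⟨n, rfl⟩ : ∃ l, n = l + 1 := ⟨n - 1, by omega⟩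
  have last_eq_zero : m.choose n = 0 := Nat.choose_eq_zero_of_lt (by omega)
  rw [sum_range_succ', sum_range_succ' (fun k ↦ m.choose k • g k),
    sum_range_succ (fun k ↦ m.choose k • g (k + 1)), last_eq_zero]
  simp only [Nat.choose_succ_succ', Nat.choose_zero_right, add_nsmul, sum_add_distrib,
    zero_nsmul, add_zero]
  abel

theorem sum_range_choose_add_nsmul (hmn : m + j < n) (g : ℕ → A) :
    ∑ k ∈ range n, (m + j).choose k • g k =
      ∑ i ∈ range n, j.choose i • ∑ k ∈ range n, m.choose k • g (k + i) := by
  induction j generalizing g with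
  | zero =>
    obtain ⟨n, rfl⟩ : ∃ l, n = l + 1 := ⟨n - 1, by omega⟩
    simp [sum_range_succ' (fun i ↦ Nat.choose 0 i • _)]
  | succ j ih =>
    calc ∑ k ∈ range n, (m + j + 1).choose k • g k
      _ = ∑ k ∈ range n, (m + j).choose k • g k + ∑ k ∈ range n, (m + j).choose k • g (k + 1) :=
        sum_range_choose_succ_nsmul hmn g
      _ = ∑ i ∈ range n, j.choose i • ∑ k ∈ range n, m.choose k • g (k + i) +
          ∑ i ∈ range n, j.choose i • ∑ k ∈ range n, m.choose k • g (k + (i + 1)) := by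
        rw [ih (by omega) g, ih (by omega) (fun k ↦ g (k + 1))]
        simp only [add_assoc]
      _ = ∑ i ∈ range n, (j + 1).choose i • ∑ k ∈ range n, m.choose k • g (k + i) :=
        (sum_range_choose_succ_nsmul (by omega) _).symm

theorem sum_range_choose_add_nsmul_eq_zero (hmn : m + j < n) {g : ℕ → A}
    (hg : ∀ i ≤ j, ∑ k ∈ range n, m.choose k • g (k + i) = 0) :
    ∑ k ∈ range n, (m + j).choose k • g k = 0 := by
  rw [sum_range_choose_add_nsmul hmn]
  refine sum_eq_zero fun i _ ↦ ?_
  rcases le_or_gt i j with hij | hji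
  · rw [hg i hij, nsmul_zero]
  · rw [Nat.choose_eq_zero_of_lt hji, zero_nsmul]

theorem semiInsdel_iff_deletion_orthogonality_general {t : ℕ} (s : ℕ) (hmn : m + t < n)
    (f : ℕ → ℕ → A) :
    (∀ j a b : ℕ, j ≤ t → a ≤ t + s - j → b ≤ t + s - j →
      ∑ k ∈ range n, (m + j).choose k • f (k + a) (k + b) = 0) ↔
    (∀ a b : ℕ, a ≤ t + s → b ≤ t + s →
      ∑ k ∈ range n, m.choose k • f (k + a) (k + b) = 0) := by
  refine ⟨fun h a b ↦ h 0 a b t.zero_le, fun h j a b hj ha hb ↦ ?_⟩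
  refine sum_range_choose_add_nsmul_eq_zero (by omega) fun i hi ↦ ?_
  simpa only [add_assoc] using h (i + a) (i + b) (by omega) (by omega)

end BinomialSums

theorem semiInsdel_iff_deletion_orthogonality
    (N t s : ℕ) (hts : t + s ≤ N)
    (α β : ℕ → ℂ) (hα : ∀ k : ℕ, N < k → α k = 0) (hβ : ∀ k : ℕ, N < k → β k = 0) :
    (∀ j a' b' : ℕ, j ≤ t → a' ≤ t + s - j → b' ≤ t + s - j →
      ∑ k ∈ Finset.range (N + 1), ((N - t - s + j).choose k : ℂ) / ((Real.sqrt ((N.choose (k + a') * N.choose (k + b') : ℕ)) : ℝ) : ℂ) * ((starRingEnd ℂ) (α (k + a')) * β (k + b')) = 0) ↔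
    (∀ a' b' : ℕ, a' ≤ t + s → b' ≤ t + s →
      ∑ k ∈ Finset.range (N + 1), ((N - (t + s)).choose k : ℂ) / ((Real.sqrt ((N.choose (k + a') * N.choose (k + b') : ℕ)) : ℝ) : ℂ) * ((starRingEnd ℂ) (α (k + a')) * β (k + b')) = 0) := by
  simpa only [nsmul_eq_mul, div_mul_eq_mul_div, mul_div_assoc, Nat.sub_sub] using
    semiInsdel_iff_deletion_orthogonality_general s (m := N - t - s) (n := N + 1) (by omega)
      fun p q ↦ (starRingEnd ℂ) (α p) * β q / ((Real.sqrt ((N.choose p * N.choose q : ℕ)) : ℝ) : ℂ)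
end

section
/- Fix natural numbers N, t, s with t + s ≤ N. Then (α, β) satisfies the (t, s) full-insdel orthogonality conditions (C5) if and only if (α, β) satisfies the (t+s)-deletion orthogonality conditions. (This is the combinatorial core of Theorem 4: the full-insdel conditions for t insertions followed by s deletions are equivalent to the (t+s)-deletion conditions of Aydin et al.) -/
open Finset

/-!
Let `S` be the shift of sequences, so that `∑ₖ C(m, k) gₖ` is the value at `0` of `(1 + S)ᵐ g`.
Since `(1 + S)ᵐ⁺ᵈ = (1 + S)ᵈ (1 + S)ᵐ`, the sum of order `m + d` of a sequence is a combination
of the sums of order `m` of its first `d + 1` shifts. Shifting `k ↦ F (k + a) (k + b)` by `i`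
replaces `(a, b)` by `(a + i, b + i)`, so with `m = N - t - s` and `d = 2ℓ + j` every insdel
condition is a combination of deletion conditions. Conversely, the deletion conditions are the
insdel conditions with `ℓ = j = 0`.
-/

section BinomialSum

variable {A : Type*} [AddCommMonoid A]

/-- The sum `∑ₖ C(m, k) gₖ`, that is, the binomial transform of `g` without signs, which makes
sense in any additive commutative monoid. -/
def binomialSum (m : ℕ) (g : ℕ → A) : A :=
  ∑ k ∈ range (m + 1), m.choose k • g k

theorem sum_range_choose_nsmul_eq_binomialSum {m n : ℕ} (hmn : m ≤ n) (g : ℕ → A) :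
    ∑ k ∈ range (n + 1), m.choose k • g k = binomialSum m g := by
  refine (sum_subset (range_mono (by lia)) fun k _ hk ↦ ?_).symm
  rw [Nat.choose_eq_zero_of_lt (by simpa using hk), zero_nsmul]

theorem binomialSum_zero (g : ℕ → A) : binomialSum 0 g = g 0 := by
  simp [binomialSum]

theorem binomialSum_succ (m : ℕ) (g : ℕ → A) :
    binomialSum (m + 1) g = binomialSum m g + binomialSum m fun k ↦ g (k + 1) :=
  sum_choose_succ_nsmul (fun k _ ↦ g k) m

theorem binomialSum_add (m d : ℕ) (g : ℕ → A) :
    binomialSum (m + d) g = binomialSum d fun i ↦ binomialSum m fun k ↦ g (k + i) := by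
  induction d generalizing g with
  | zero => simp only [add_zero, binomialSum_zero]
  | succ d ih =>
    rw [← add_assoc, binomialSum_succ, ih g, ih fun k ↦ g (k + 1), binomialSum_succ]
    simp only [add_assoc]

theorem binomialSum_eq_zero {m : ℕ} {g : ℕ → A} (hg : ∀ k ≤ m, g k = 0) :
    binomialSum m g = 0 :=
  sum_eq_zero fun k hk ↦ by rw [hg k (mem_range_succ_iff.mp hk), nsmul_zero]

theorem binomialSum_diagonal_add_eq_zero {F : ℕ → ℕ → A} {m d a b : ℕ}
    (h : ∀ i ≤ d, binomialSum m (fun k ↦ F (k + (a + i)) (k + (b + i))) = 0) :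
    binomialSum (m + d) (fun k ↦ F (k + a) (k + b)) = 0 := by
  rw [binomialSum_add]
  refine binomialSum_eq_zero fun i hi ↦ ?_
  simpa only [add_assoc, add_comm i] using h i hi

theorem fullInsdel_iff_deletion_orthogonality_general {N t s : ℕ} (hts : t + s ≤ N)
    (F : ℕ → ℕ → A) :
    (∀ ℓ j a b : ℕ, ℓ ≤ min s t → j ≤ t - ℓ → a ≤ t + s - 2 * ℓ - j → b ≤ t + s - 2 * ℓ - j →
      ∑ k ∈ range (N + 1), (N - t - s + 2 * ℓ + j).choose k • F (k + a) (k + b) = 0) ↔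
    (∀ a b : ℕ, a ≤ t + s → b ≤ t + s →
      ∑ k ∈ range (N + 1), (N - (t + s)).choose k • F (k + a) (k + b) = 0) := by
  constructor
  · intro insdel a b ha hb
    simpa [Nat.sub_sub] using insdel 0 0 a b (by simp) (by simp) (by simpa) (by simpa)
  · intro deletion ℓ j a b hℓ hj ha hb
    have order_le : N - t - s + 2 * ℓ + j ≤ N := by lia
    rw [sum_range_choose_nsmul_eq_binomialSum order_le fun k ↦ F (k + a) (k + b), add_assoc]
    refine binomialSum_diagonal_add_eq_zero fun i hi ↦ ?_
    rw [← sum_range_choose_nsmul_eq_binomialSum (n := N) (by lia), Nat.sub_sub]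
    exact deletion (a + i) (b + i) (by lia) (by lia)

end BinomialSum

theorem fullInsdel_iff_deletion_orthogonality
    (N t s : ℕ) (hts : t + s ≤ N)
    (α β : ℕ → ℂ) (hα : ∀ k : ℕ, N < k → α k = 0) (hβ : ∀ k : ℕ, N < k → β k = 0) :
    (∀ ℓ j a' b' : ℕ, ℓ ≤ min s t → j ≤ t - ℓ → a' ≤ t + s - 2 * ℓ - j → b' ≤ t + s - 2 * ℓ - j →
      ∑ k ∈ Finset.range (N + 1), ((N - t - s + 2 * ℓ + j).choose k : ℂ) / ((Real.sqrt ((N.choose (k + a') * N.choose (k + b') : ℕ)) : ℝ) : ℂ) * ((starRingEnd ℂ) (α (k + a')) * β (k + b')) = 0) ↔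
    (∀ a' b' : ℕ, a' ≤ t + s → b' ≤ t + s →
      ∑ k ∈ Finset.range (N + 1), ((N - (t + s)).choose k : ℂ) / ((Real.sqrt ((N.choose (k + a') * N.choose (k + b') : ℕ)) : ℝ) : ℂ) * ((starRingEnd ℂ) (α (k + a')) * β (k + b')) = 0) := by
  simpa only [nsmul_eq_mul, mul_div_assoc', div_mul_eq_mul_div] using
    fullInsdel_iff_deletion_orthogonality_general hts fun x y ↦
      starRingEnd ℂ (α x) * β y / (Real.sqrt ((N.choose x * N.choose y : ℕ)) : ℂ)
end

section
/- Fix natural numbers N, t, s with t + s ≤ N. Then (α, β) satisfies the (t, s) full-insdel orthogonality conditions (C5) if and only if (α, β) satisfies the (t, s) semi-insdel orthogonality conditions (C3). (Hence for permutation-invariant codes, the orthogonality conditions for t insertions followed by s deletions coincide with those for s deletions followed by t insertions.) -/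
open Finset

/-! Pascal's rule splits the sum with coefficients `C(n + 1, k)` and shifts `(a, b)` into the sums
with coefficients `C(n, k)` and shifts `(a, b)` and `(a + 1, b + 1)`. Vanishing thus propagates from
order `n` to order `n + m` at the cost of shrinking the window of admissible shifts by `m`. In both
families of conditions the order plus the window size is constantly `N`, so each family is
equivalent to its member of lowest order, which they share: order `N - t - s`, window `t + s`. -/

section BinomialOrthogonality

variable {M : Type*} [AddCommMonoid M]

lemma sum_range_choose_succ_nsmul_s10 {n N : ℕ} (hn : n < N) (f : ℕ → M) :
    ∑ k ∈ range (N + 1), (n + 1).choose k • f k =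
      ∑ k ∈ range (N + 1), n.choose k • f k + ∑ k ∈ range (N + 1), n.choose k • f (k + 1) := by
  have last_eq_zero : n.choose N • f (N + 1) = 0 := by
    rw [Nat.choose_eq_zero_of_lt hn, zero_nsmul]
  calc ∑ k ∈ range (N + 1), (n + 1).choose k • f k
    _ = ∑ k ∈ range N, (n.choose k + n.choose (k + 1)) • f (k + 1) + f 0 := by
      simp only [sum_range_succ' _ N, Nat.choose_succ_succ', Nat.choose_zero_right, one_nsmul]
    _ = (∑ k ∈ range N, n.choose (k + 1) • f (k + 1) + n.choose 0 • f 0) +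
          (∑ k ∈ range N, n.choose k • f (k + 1) + n.choose N • f (N + 1)) := by
      simp only [add_nsmul, sum_add_distrib, last_eq_zero, Nat.choose_zero_right, one_nsmul]
      abel
    _ = _ := by
      rw [← sum_range_succ' (fun k ↦ n.choose k • f k),
        ← sum_range_succ (fun k ↦ n.choose k • f (k + 1))]

/-- The order-`n` orthogonality conditions on `F` with shifts in the window `[0, w]`. For a pair of
codewords, `F i j` is `conj (α i) * β j / √(C(N, i) C(N, j))`. Summing up to `N` loses nothing as
long as `n ≤ N`. -/
def BinomialOrthogonal (F : ℕ → ℕ → M) (N n w : ℕ) : Prop :=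
  ∀ a b : ℕ, a ≤ w → b ≤ w → ∑ k ∈ range (N + 1), n.choose k • F (k + a) (k + b) = 0

namespace BinomialOrthogonal

variable {F : ℕ → ℕ → M} {N n w : ℕ}

lemma succ (h : BinomialOrthogonal F N n (w + 1)) (hn : n < N) :
    BinomialOrthogonal F N (n + 1) w := by
  intro a b ha hb
  have same_shift : ∑ k ∈ range (N + 1), n.choose k • F (k + a) (k + b) = 0 :=
    h a b (by lia) (by lia)
  have next_shift : ∑ k ∈ range (N + 1), n.choose k • F (k + 1 + a) (k + 1 + b) = 0 := by
    simpa only [Nat.succ_add_eq_add_succ] using h (a + 1) (b + 1) (by lia) (by lia)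
  rw [sum_range_choose_succ_nsmul_s10 hn (fun k ↦ F (k + a) (k + b)), same_shift, next_shift,
    add_zero]

lemma add {m : ℕ} (h : BinomialOrthogonal F N n (w + m)) (hm : n + m ≤ N) :
    BinomialOrthogonal F N (n + m) w := by
  induction m generalizing w with
  | zero => exact h
  | succ m ih =>
    rw [← add_assoc, add_right_comm] at h
    exact (ih h (by lia)).succ (by lia)

end BinomialOrthogonal

theorem fullInsdel_iff_semiInsdel_orthogonality_general (F : ℕ → ℕ → M) {N t s : ℕ}
    (hts : t + s ≤ N) :
    (∀ ℓ j : ℕ, ℓ ≤ min s t → j ≤ t - ℓ →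
      BinomialOrthogonal F N (N - t - s + 2 * ℓ + j) (t + s - 2 * ℓ - j)) ↔
    (∀ j : ℕ, j ≤ t → BinomialOrthogonal F N (N - t - s + j) (t + s - j)) := by
  constructor
  · intro full j hj
    exact full 0 j (Nat.zero_le _) hj
  · intro semi ℓ j hℓ hj
    have window_eq : t + s = t + s - 2 * ℓ - j + (2 * ℓ + j) := by lia
    have base : BinomialOrthogonal F N (N - t - s) (t + s) := semi 0 (Nat.zero_le t)
    rw [window_eq] at base
    rw [add_assoc]
    exact base.add (by lia)

end BinomialOrthogonality

theorem fullInsdel_iff_semiInsdel_orthogonality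
    (N t s : ℕ) (hts : t + s ≤ N)
    (α β : ℕ → ℂ) (hα : ∀ k : ℕ, N < k → α k = 0) (hβ : ∀ k : ℕ, N < k → β k = 0) :
    (∀ ℓ j a' b' : ℕ, ℓ ≤ min s t → j ≤ t - ℓ → a' ≤ t + s - 2 * ℓ - j → b' ≤ t + s - 2 * ℓ - j →
      ∑ k ∈ Finset.range (N + 1), ((N - t - s + 2 * ℓ + j).choose k : ℂ) / ((Real.sqrt ((N.choose (k + a') * N.choose (k + b') : ℕ)) : ℝ) : ℂ) * ((starRingEnd ℂ) (α (k + a')) * β (k + b')) = 0) ↔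
    (∀ j a' b' : ℕ, j ≤ t → a' ≤ t + s - j → b' ≤ t + s - j →
      ∑ k ∈ Finset.range (N + 1), ((N - t - s + j).choose k : ℂ) / ((Real.sqrt ((N.choose (k + a') * N.choose (k + b') : ℕ)) : ℝ) : ℂ) * ((starRingEnd ℂ) (α (k + a')) * β (k + b')) = 0) := by
  simpa only [BinomialOrthogonal, imp_forall_iff, nsmul_eq_mul, div_mul_eq_mul_div, mul_div_assoc]
    using fullInsdel_iff_semiInsdel_orthogonality_general
      (fun i j ↦ starRingEnd ℂ (α i) * β j / (√(N.choose i * N.choose j : ℕ) : ℝ)) hts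
end

section
/- Fix natural numbers N, t, s with t + s ≤ N. Then (α, β) satisfies the (t+s)-insertion non-deformation conditions (C2) if and only if (α, β) satisfies the (t, s) semi-insdel non-deformation conditions (C4). (Hence for permutation-invariant codes, correcting t insertions together with s deletions imposes the same non-deformation constraints as correcting t+s pure insertions.) -/
open Finset

/-!
Both systems ask certain binomially weighted sums along diagonals of one kernel to vanish. Pascal's
rule writes the sum with weights `(m + 1).choose k` at offset `(a, b)` as the sum of those with
weights `m.choose k` at offsets `(a, b)` and `(a + 1, b + 1)`. Hence every equation with `j > 0`
follows from those with `j = 0`, and the two systems have the same equations with `j = 0`.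
-/

section BinomialDiagSum

variable {M : Type*} [AddCommMonoid M]

lemma sum_range_succ_choose_succ_nsmul (f : ℕ → M) (n m : ℕ) :
    ∑ k ∈ range (n + 1), (m + 1).choose k • f k =
      ∑ k ∈ range (n + 1), m.choose k • f k + ∑ k ∈ range n, m.choose k • f (k + 1) := by
  simp only [sum_range_succ' _ n, Nat.choose_succ_succ', add_nsmul, sum_add_distrib,
    Nat.choose_zero_right]
  abel

/-- The sum of a kernel `f` along the diagonal starting at `(a, b)`, truncated at `k = n` and
weighted by the `m`-th row of Pascal's triangle. The non-deformation conditions say that such sums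
vanish. -/
def binomialDiagSum (n : ℕ) (f : ℕ → ℕ → M) (m a b : ℕ) : M :=
  ∑ k ∈ range (n + 1), m.choose k • f (k + a) (k + b)

variable {n : ℕ} {f : ℕ → ℕ → M}

lemma binomialDiagSum_succ {a b : ℕ} (hf : f (n + 1 + a) (n + 1 + b) = 0) (m : ℕ) :
    binomialDiagSum n f (m + 1) a b =
      binomialDiagSum n f m a b + binomialDiagSum n f m (a + 1) (b + 1) := by
  simp only [binomialDiagSum, ← add_assoc, add_right_comm _ a 1, add_right_comm _ b 1]
  rw [sum_range_succ_choose_succ_nsmul,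
    sum_range_succ (fun k ↦ m.choose k • f (k + 1 + a) (k + 1 + b)), hf, nsmul_zero, add_zero]

lemma binomialDiagSum_add_eq_zero (hf : ∀ p q, n < p → n < q → f p q = 0) {m u : ℕ}
    (h : ∀ a b, a ≤ u → b ≤ u → binomialDiagSum n f m a b = 0) {j a b : ℕ}
    (ha : a + j ≤ u) (hb : b + j ≤ u) : binomialDiagSum n f (m + j) a b = 0 := by
  induction j generalizing a b with
  | zero => exact h a b ha hb
  | succ j ih =>
    rw [← add_assoc, binomialDiagSum_succ (hf _ _ (by lia) (by lia)), ih (by lia) (by lia),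
      ih (by lia) (by lia), add_zero]

lemma forall_binomialDiagSum_add_eq_zero_iff (hf : ∀ p q, n < p → n < q → f p q = 0)
    {m r u : ℕ} (hr : r ≤ u) :
    (∀ j a b, j ≤ r → a ≤ u - j → b ≤ u - j → binomialDiagSum n f (m + j) a b = 0) ↔
      ∀ a b, a ≤ u → b ≤ u → binomialDiagSum n f m a b = 0 :=
  ⟨fun h a b ha hb ↦ h 0 a b r.zero_le ha hb, fun h _ _ _ hj ha hb ↦
    binomialDiagSum_add_eq_zero hf h (Nat.add_le_of_le_sub (hj.trans hr) ha)
      (Nat.add_le_of_le_sub (hj.trans hr) hb)⟩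

end BinomialDiagSum

/-- The difference of the rank-one matrices with entries `conj (α p) * α q` and `conj (β p) * β q`,
divided entrywise by `√(C(N, p) * C(N, q))`, with division by `0` giving `0` beyond index `N`. The
non-deformation conditions are linear in it. -/
noncomputable def deformationKernel (N : ℕ) (α β : ℕ → ℂ) (p q : ℕ) : ℂ :=
  (starRingEnd ℂ (α p) * α q - starRingEnd ℂ (β p) * β q) /
    (Real.sqrt (N.choose p * N.choose q : ℕ) : ℂ)

lemma deformationKernel_eq_zero {N p : ℕ} {α β : ℕ → ℂ} (hα : α p = 0) (hβ : β p = 0) (q : ℕ) :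
    deformationKernel N α β p q = 0 := by
  simp [deformationKernel, hα, hβ]

lemma binomialDiagSum_deformationKernel (n N : ℕ) (α β : ℕ → ℂ) (m a b : ℕ) :
    binomialDiagSum n (deformationKernel N α β) m a b =
      ∑ k ∈ range (n + 1),
        (m.choose k : ℂ) / (Real.sqrt (N.choose (k + a) * N.choose (k + b) : ℕ) : ℂ) *
          (starRingEnd ℂ (α (k + a)) * α (k + b) - starRingEnd ℂ (β (k + a)) * β (k + b)) := by
  simp only [binomialDiagSum, deformationKernel, nsmul_eq_mul, mul_div_assoc', div_mul_eq_mul_div]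

theorem insertion_iff_semiInsdel_nonDeformation
    (N t s : ℕ) (hts : t + s ≤ N)
    (α β : ℕ → ℂ) (hα : ∀ k : ℕ, N < k → α k = 0) (hβ : ∀ k : ℕ, N < k → β k = 0) :
    (∀ j a' b' : ℕ, j ≤ t + s → a' ≤ t + s - j → b' ≤ t + s - j →
      ∑ k ∈ Finset.range (N + 1), ((N - (t + s) + j).choose k : ℂ) / ((Real.sqrt ((N.choose (k + a') * N.choose (k + b') : ℕ)) : ℝ) : ℂ) * ((starRingEnd ℂ) (α (k + a')) * α (k + b') - (starRingEnd ℂ) (β (k + a')) * β (k + b')) = 0) ↔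
    (∀ j a' b' : ℕ, j ≤ t → a' ≤ t + s - j → b' ≤ t + s - j →
      ∑ k ∈ Finset.range (N + 1), ((N - t - s + j).choose k : ℂ) / ((Real.sqrt ((N.choose (k + a') * N.choose (k + b') : ℕ)) : ℝ) : ℂ) * ((starRingEnd ℂ) (α (k + a')) * α (k + b') - (starRingEnd ℂ) (β (k + a')) * β (k + b')) = 0) := by
  have kernel_eq_zero (p q : ℕ) (hp : N < p) (_ : N < q) : deformationKernel N α β p q = 0 :=
    deformationKernel_eq_zero (hα p hp) (hβ p hp) q
  simp only [Nat.sub_sub, ← binomialDiagSum_deformationKernel]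
  rw [forall_binomialDiagSum_add_eq_zero_iff kernel_eq_zero le_rfl,
    forall_binomialDiagSum_add_eq_zero_iff kernel_eq_zero (Nat.le_add_right t s)]
end

section
/- For all natural numbers m, n, k with k ≤ m + n, and for all x : Fin m → Bool and y : Fin n → Bool, the Vandermonde decomposition of Dicke functions holds: D_{m+n, k}(append(x, y)) = Σ_{a=0}^{k} √( (C(m, a) · C(n, k−a)) / C(m+n, k) ) · D_{m, a}(x) · D_{n, k−a}(y), where append(x, y) : Fin (m+n) → Bool is the concatenation of x and y. -/
open Finset

/-- The Dicke function `D_{n,k}`: the amplitude of the Dicke state `|D^n_k⟩`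
on the computational basis vector `x : Fin n → Bool`. -/
noncomputable def Dicke (n k : ℕ) (x : Fin n → Bool) : ℂ :=
  if (Finset.univ.filter fun i => x i = true).card = k then
    ((1 / Real.sqrt (n.choose k) : ℝ) : ℂ)
  else 0

/-!
Up to the factor `√(n.choose k)`, the function `D_{n,k}` is the indicator function of the bit
strings of weight `k`. Since the weight is additive under concatenation, the indicator of weight `k`
on the concatenated strings is the convolution over `a + b = k` of the indicators of weights `a`
and `b`. Restoring the normalizations gives the coefficients.
-/

/-- The Hamming weight of a bit string: the number of its coordinates equal to `true`. It is the
statistic on which the Dicke functions depend. The coordinates may form any finite type. -/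
def hammingWeight {ι : Type*} [Fintype ι] (x : ι → Bool) : ℕ :=
  #{i | x i = true}

theorem hammingWeight_le_card {ι : Type*} [Fintype ι] (x : ι → Bool) :
    hammingWeight x ≤ Fintype.card ι :=
  card_le_univ _

theorem hammingWeight_append {m n : ℕ} (x : Fin m → Bool) (y : Fin n → Bool) :
    hammingWeight (Fin.append x y) = hammingWeight x + hammingWeight y := by
  simp only [hammingWeight, card_filter, Fin.sum_univ_add, Fin.append_left, Fin.append_right]

theorem sum_antidiagonal_ite_mul_ite {A R : Type*} [AddMonoid A] [HasAntidiagonal A]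
    [DecidableEq A] [NonAssocSemiring R] (p q k : A) :
    ∑ ab ∈ antidiagonal k, (if p = ab.1 then (1 : R) else 0) * (if q = ab.2 then 1 else 0) =
      if p + q = k then 1 else 0 := by
  simp only [ite_zero_mul_ite_zero, mul_one, ← Prod.mk_inj, Prod.mk.eta, sum_ite_eq,
    HasAntidiagonal.mem_antidiagonal]

theorem dicke_eq_inv_sqrt_choose_mul (n k : ℕ) (x : Fin n → Bool) :
    Dicke n k x = (√(n.choose k : ℝ) : ℂ)⁻¹ * if hammingWeight x = k then 1 else 0 := by
  rw [Dicke, mul_boole, one_div, Complex.ofReal_inv, hammingWeight]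

theorem sqrt_choose_mul_dicke (n k : ℕ) (x : Fin n → Bool) :
    (√(n.choose k : ℝ) : ℂ) * Dicke n k x = if hammingWeight x = k then 1 else 0 := by
  rw [dicke_eq_inv_sqrt_choose_mul]
  split_ifs with hx
  · have hkn : k ≤ n := by simpa [hx] using hammingWeight_le_card x
    have hchoose : 0 < (n.choose k : ℝ) := mod_cast Nat.choose_pos hkn
    rw [mul_one, mul_inv_cancel₀ (Complex.ofReal_ne_zero.mpr (Real.sqrt_pos.mpr hchoose).ne')]
  · simp

theorem sqrt_choose_mul_choose_div_mul_dicke_mul_dicke (m n a b : ℕ) (c : ℝ)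
    (x : Fin m → Bool) (y : Fin n → Bool) :
    (√((m.choose a * n.choose b : ℝ) / c) : ℂ) * Dicke m a x * Dicke n b y =
      (√c : ℂ)⁻¹ *
        ((if hammingWeight x = a then 1 else 0) * (if hammingWeight y = b then 1 else 0)) := by
  rw [← sqrt_choose_mul_dicke, ← sqrt_choose_mul_dicke, Real.sqrt_div (by positivity),
    Real.sqrt_mul (by positivity)]
  push_cast
  ring

theorem dicke_vandermonde (m n k : ℕ) (hk : k ≤ m + n)
    (x : Fin m → Bool) (y : Fin n → Bool) :
    Dicke (m + n) k (Fin.append x y) =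
      ∑ a ∈ Finset.range (k + 1),
        ((Real.sqrt ((m.choose a * n.choose (k - a) : ℝ) / ((m + n).choose k : ℝ)) : ℝ) : ℂ)
          * Dicke m a x * Dicke n (k - a) y := by
  simp only [sqrt_choose_mul_choose_div_mul_dicke_mul_dicke]
  have convolution : ∑ a ∈ range (k + 1), (if hammingWeight x = a then (1 : ℂ) else 0) *
      (if hammingWeight y = k - a then 1 else 0) =
        if hammingWeight (Fin.append x y) = k then 1 else 0 := by
    rw [hammingWeight_append, ← sum_antidiagonal_ite_mul_ite,
      Nat.sum_antidiagonal_eq_sum_range_succ_mk]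
  rw [← mul_sum, convolution, dicke_eq_inv_sqrt_choose_mul]
end
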